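/- arXiv:2403.17193 — 2 statements merged into one kernel-verified Lean document; each statement's English description precedes it below -/
import Mathlib

section
/- Every nonzero 2-dimensional pre-Lie Poisson algebra (P, ·, ∘) over ℂ is isomorphic either to one of the 2-dimensional Novikov–Poisson algebras on a basis e1, e2 (all unlisted products of basis elements, other than those forced by commutativity of ·, are zero), namely: with · ≡ 0: N01: e1∘e1 = e2; N02: e2∘e1 = −e1; N03: e1∘e1 = e1, e2∘e2 = e2; N04: e1∘e1 = e1; N05: e1∘e2 = e1, e2∘e2 = e1 + e2; N06^γ: e1∘e2 = e1, e2∘e1 = γ·e1, e2∘e2 = e2; and (α, β ∈ ℂ): N07^{α,β}: e1·e1 = e1, e2·e2 = e2, e1∘e1 = α·e1, e2∘e2 = β·e2; N08^{α,β}: e1·e1 = e1, e1·e2 = e2, e1∘e1 = α·e1 + e2, e1∘e2 = β·e2, e2∘e1 = α·e2; N09^{α,β}: e1·e1 = e1, e1·e2 = e2, e1∘e1 = α·e1, e1∘e2 = β·e2, e2∘e1 = α·e2; N10^α: e1·e1 = e1, e1∘e1 = α·e1, e2∘e2 = e2; N11^α: e1·e1 = e1, e1∘e1 = α·e1; N12^α: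 e1·e1 = e2, e1∘e1 = α·e1, e1∘e2 = e2, e2∘e1 = α·e2; N13^α: e1·e1 = e2, e1∘e1 = e1 + α·e2, e2∘e1 = e2; N14^α: e1·e1 = e2, e1∘e1 = α·e2; or to one of the following algebras with · ≡ 0: P01^α (α ∈ ℂ, α ≠ 0): e2∘e1 = −e1, e2∘e2 = α·e2; P02: e1∘e1 = e2, e2∘e1 = −e1, e2∘e2 = −2·e2; P03: e2∘e1 = −e1, e2∘e2 = e1 − e2. -/
noncomputable section

/-- The 2-dimensional complex vector space. -/
abbrev V2 : Type := Fin 2 → ℂ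

/-- The bilinear multiplication on `V2` determined by a table of structure constants:
`c i j` is the product of the `i`-th and `j`-th basis vectors. -/
def tm (c : Fin 2 → Fin 2 → V2) : V2 → V2 → V2 :=
  fun x y => ∑ i, ∑ j, (x i * y j) • c i j

/-- Multiplication table with the given values of `e1*e1`, `e1*e2`, `e2*e1`, `e2*e2`. -/
def tbl (a b c d : V2) : Fin 2 → Fin 2 → V2 := ![![a, b], ![c, d]]

/-- The zero multiplication on `V2`. -/
def zm : V2 → V2 → V2 := fun _ _ => 0

/-- Isomorphism of algebras with one multiplication: a ℂ-linear bijection preserving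
the multiplication. -/
def Iso1 {A : Type*} [AddCommGroup A] [Module ℂ A] {B : Type*} [AddCommGroup B]
    [Module ℂ B] (μ : A → A → A) (ν : B → B → B) : Prop :=
  ∃ φ : A ≃ₗ[ℂ] B, ∀ x y, φ (μ x y) = ν (φ x) (φ y)

/-- Isomorphism of algebras with two multiplications: a ℂ-linear bijection preserving
both multiplications. -/
def Iso2 {A : Type*} [AddCommGroup A] [Module ℂ A] {B : Type*} [AddCommGroup B]
    [Module ℂ B] (μ₁ μ₂ : A → A → A) (ν₁ ν₂ : B → B → B) : Prop :=
  ∃ φ : A ≃ₗ[ℂ] B,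
    (∀ x y, φ (μ₁ x y) = ν₁ (φ x) (φ y)) ∧ (∀ x y, φ (μ₂ x y) = ν₂ (φ x) (φ y))

/-- The commutative associative algebra A01: `e1·e1 = e1`, `e2·e2 = e2`. -/
def cA01 : Fin 2 → Fin 2 → V2 := tbl ![1,0] 0 0 ![0,1]

/-- The commutative associative algebra A02: `e1·e1 = e1`, `e1·e2 = e2·e1 = e2`. -/
def cA02 : Fin 2 → Fin 2 → V2 := tbl ![1,0] ![0,1] ![0,1] 0

/-- The commutative associative algebra A03: `e1·e1 = e1`. -/
def cA03 : Fin 2 → Fin 2 → V2 := tbl ![1,0] 0 0 0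

/-- The commutative associative algebra A04: `e1·e1 = e2`. -/
def cA04 : Fin 2 → Fin 2 → V2 := tbl ![0,1] 0 0 0

/-- The nonzero 2-dimensional Novikov algebras N01–N05 and the family N06^γ,
indexed by `Fin 5 ⊕ ℂ`. -/
def novAlg : Fin 5 ⊕ ℂ → Fin 2 → Fin 2 → V2
  | Sum.inl i => ![tbl ![0,1] 0 0 0,          -- N01
                   tbl 0 0 ![-1,0] 0,         -- N02
                   tbl ![1,0] 0 0 ![0,1],     -- N03
                   tbl ![1,0] 0 0 0,          -- N04
                   tbl 0 ![1,0] 0 ![1,1]] i   -- N05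
  | Sum.inr γ => tbl 0 ![1,0] ![γ,0] ![0,1]   -- N06^γ

/-- Index of the Novikov–Poisson algebras N07–N14 with nontrivial commutative
associative multiplication. -/
inductive NPIdx : Type
  | n07 (α β : ℂ)
  | n08 (α β : ℂ)
  | n09 (α β : ℂ)
  | n10 (α : ℂ)
  | n11 (α : ℂ)
  | n12 (α : ℂ)
  | n13 (α : ℂ)
  | n14 (α : ℂ)

/-- The commutative associative multiplication of N07–N14. -/
def npMul : NPIdx → Fin 2 → Fin 2 → V2
  | .n07 _ _ => cA01
  | .n08 _ _ => cA02
  | .n09 _ _ => cA02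
  | .n10 _ => cA03
  | .n11 _ => cA03
  | .n12 _ => cA04
  | .n13 _ => cA04
  | .n14 _ => cA04

/-- The Novikov multiplication of N07–N14. -/
def npCirc : NPIdx → Fin 2 → Fin 2 → V2
  | .n07 α β => tbl ![α,0] 0 0 ![0,β]
  | .n08 α β => tbl ![α,1] ![0,β] ![0,α] 0
  | .n09 α β => tbl ![α,0] ![0,β] ![0,α] 0
  | .n10 α => tbl ![α,0] 0 0 ![0,1]
  | .n11 α => tbl ![α,0] 0 0 0
  | .n12 α => tbl ![α,0] ![0,1] ![0,α] 0
  | .n13 α => tbl ![1,α] 0 ![0,1] 0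
  | .n14 α => tbl ![0,α] 0 0 0

section Classification

open Module

variable {P : Type*} [AddCommGroup P] [Module ℂ P]

theorem tm_zero : tm (fun _ _ => 0) = zm := by
  funext x y
  simp [tm, zm]

/-- In a basis, a bilinear map is given by its table of structure constants. -/
theorem equivFun_apply_eq_tm (b : Basis (Fin 2) ℂ P) (μ : P →ₗ[ℂ] P →ₗ[ℂ] P)
    {c : Fin 2 → Fin 2 → V2} (hc : ∀ i j, b.equivFun (μ (b i) (b j)) = c i j) (x y : P) :
    b.equivFun (μ x y) = tm c (b.equivFun x) (b.equivFun y) := by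
  conv_lhs => rw [← b.sum_equivFun x, ← b.sum_equivFun y]
  simp only [map_sum, LinearMap.sum_apply, map_smul, LinearMap.smul_apply, hc, tm,
    Finset.smul_sum, smul_smul]
  rw [Finset.sum_comm]
  simp only [mul_comm]

/-- The multiplication `μ` has structure constants `c` with respect to the pair `u`, `v`. -/
def HasTable (μ : P →ₗ[ℂ] P →ₗ[ℂ] P) (u v : P) (c : Fin 2 → Fin 2 → V2) : Prop :=
  ∀ i j, μ (![u, v] i) (![u, v] j) = c i j 0 • u + c i j 1 • v

theorem hasTable_tbl {μ : P →ₗ[ℂ] P →ₗ[ℂ] P} {u v : P} {a b c d : V2} :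
    HasTable μ u v (tbl a b c d) ↔ μ u u = a 0 • u + a 1 • v ∧ μ u v = b 0 • u + b 1 • v ∧
      μ v u = c 0 • u + c 1 • v ∧ μ v v = d 0 • u + d 1 • v := by
  simp [HasTable, Fin.forall_fin_two, tbl, and_assoc]

theorem iso2_of_hasTable (hdim : finrank ℂ P = 2) {μ ν : P →ₗ[ℂ] P →ₗ[ℂ] P} {u v : P}
    (h : LinearIndependent ℂ ![u, v]) {c d : Fin 2 → Fin 2 → V2}
    (hc : HasTable μ u v c) (hd : HasTable ν u v d) :
    Iso2 (fun x y => μ x y) (fun x y => ν x y) (tm c) (tm d) := by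
  let b := basisOfLinearIndependentOfCardEqFinrank h (by simp [hdim])
  have hb : ⇑b = ![u, v] := coe_basisOfLinearIndependentOfCardEqFinrank h _
  have key : ∀ {ρ : P →ₗ[ℂ] P →ₗ[ℂ] P} {e : Fin 2 → Fin 2 → V2}, HasTable ρ u v e →
      ∀ i j, b.equivFun (ρ (b i) (b j)) = e i j := by
    intro ρ e he i j
    have hs := b.equivFun.apply_symm_apply (e i j)
    rw [b.equivFun_symm_apply] at hs
    rw [← hs, hb, he i j]
    simp [Fin.sum_univ_two]
  exact ⟨b.equivFun, equivFun_apply_eq_tm b μ (key hc), equivFun_apply_eq_tm b ν (key hd)⟩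

theorem iso2_zm_of_hasTable (hdim : finrank ℂ P = 2) {μ ν : P →ₗ[ℂ] P →ₗ[ℂ] P}
    (hμ : ∀ x y, μ x y = 0) {u v : P} (h : LinearIndependent ℂ ![u, v])
    {d : Fin 2 → Fin 2 → V2} (hd : HasTable ν u v d) :
    Iso2 (fun x y => μ x y) (fun x y => ν x y) zm (tm d) := by
  rw [← tm_zero]
  exact iso2_of_hasTable hdim h (fun i j => by simp [hμ]) hd

/-- Coordinate functionals of a linearly independent pair in a plane. -/
theorem exists_coords (hdim : finrank ℂ P = 2) {u v : P} (h : LinearIndependent ℂ ![u, v]) :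
    ∃ f g : P →ₗ[ℂ] ℂ, f u = 1 ∧ f v = 0 ∧ g u = 0 ∧ g v = 1 ∧
      ∀ x, x = f x • u + g x • v := by
  let b := basisOfLinearIndependentOfCardEqFinrank h (by simp [hdim])
  have hb : ⇑b = ![u, v] := coe_basisOfLinearIndependentOfCardEqFinrank h _
  have h0 : b 0 = u := by simp [hb]
  have h1 : b 1 = v := by simp [hb]
  refine ⟨b.coord 0, b.coord 1, ?_, ?_, ?_, ?_, fun x => ?_⟩
  · simp [← h0]
  · simp [← h1]
  · simp [← h0]
  · simp [← h1]
  · have := b.sum_repr x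
    rw [Fin.sum_univ_two, h0, h1] at this
    exact this.symm

/-- A nonzero vector of a plane is part of a linearly independent pair. -/
theorem exists_linearIndependent_pair (hdim : finrank ℂ P = 2) {u : P} (hu : u ≠ 0) :
    ∃ v, LinearIndependent ℂ ![u, v] :=
  exists_linearIndependent_pair_of_one_lt_finrank (by omega) hu

theorem linearIndependent_combination {u v : P} (h : LinearIndependent ℂ ![u, v])
    (a b c d : ℂ) (hdet : a * d - b * c ≠ 0) :
    LinearIndependent ℂ ![a • u + b • v, c • u + d • v] :=
  (LinearIndependent.pair_add_smul_add_smul_iff a b c d).2 ⟨h, sub_ne_zero.1 hdet⟩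

/-- A commutative algebra of dimension two with a nonzero idempotent is one of
`cA01`, `cA02`, `cA03`. -/
theorem hasTable_of_idempotent (hdim : finrank ℂ P = 2) {μ : P →ₗ[ℂ] P →ₗ[ℂ] P}
    (hcomm : ∀ x y, μ x y = μ y x) (hassoc : ∀ x y z, μ (μ x y) z = μ x (μ y z))
    {e : P} (he0 : e ≠ 0) (he : μ e e = e) :
    ∃ u v, LinearIndependent ℂ ![u, v] ∧
      (HasTable μ u v cA01 ∨ HasTable μ u v cA02 ∨ HasTable μ u v cA03) := by
  have peirce : ∃ w, LinearIndependent ℂ ![e, w] ∧ (μ e w = 0 ∨ μ e w = w) := by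
    obtain ⟨w, hw⟩ := exists_linearIndependent_pair hdim he0
    obtain ⟨f, g, fu, fv, gu, gv, hx⟩ := exists_coords hdim hw
    have hew := hx (μ e w)
    generalize f (μ e w) = p at hew
    generalize g (μ e w) = q at hew
    have h := hassoc e e w
    rw [he, hew] at h
    simp only [map_add, map_smul, he, hew] at h
    have h1 := congrArg f h
    have h2 := congrArg g h
    simp only [map_add, map_smul, fu, fv, gu, gv, smul_eq_mul] at h1 h2
    have hq : q * (q - 1) = 0 := by linear_combination -h2
    rcases mul_eq_zero.1 hq with hq | hq
    · subst hq
      refine ⟨(-p) • e + (1 : ℂ) • w, ?_, Or.inl ?_⟩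
      · simpa using linearIndependent_combination hw 1 0 (-p) 1 (by simp)
      · simp only [map_add, map_smul, he, hew]
        module
    · have hq : q = 1 := by linear_combination hq
      subst hq
      have hp : p = 0 := by linear_combination -h1
      exact ⟨w, hw, Or.inr (by simp [hew, hp])⟩
  obtain ⟨w, hw, hew⟩ := peirce
  obtain ⟨f, g, fu, fv, gu, gv, hx⟩ := exists_coords hdim hw
  have hww := hx (μ w w)
  generalize f (μ w w) = s at hww
  generalize g (μ w w) = t at hww
  have hwe := hcomm w e
  rcases hew with hew | hew
  · have h := hassoc e w w
    rw [hww, hew] at h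
    simp only [map_add, map_smul, he, hew, map_zero, LinearMap.zero_apply] at h
    have hs := congrArg f h
    simp only [map_add, map_smul, fu, map_zero, smul_eq_mul] at hs
    have hs : s = 0 := by linear_combination -hs
    subst hs
    by_cases ht : t = 0
    · refine ⟨e, w, hw, Or.inr (Or.inr (hasTable_tbl.2 ?_))⟩
      simp [he, hew, hwe, hww, ht]
    · refine ⟨(1 : ℂ) • e + (0 : ℂ) • w, (0 : ℂ) • e + t⁻¹ • w,
        linearIndependent_combination hw _ _ _ _ (by simpa using ht),
        Or.inl (hasTable_tbl.2 ?_)⟩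
      simp [he, hew, hwe, hww, ht]
  · by_cases hd : s + t ^ 2 / 4 = 0
    · refine ⟨(1 : ℂ) • e + (0 : ℂ) • w, (-t / 2) • e + (1 : ℂ) • w,
        linearIndependent_combination hw _ _ _ _ (by simp),
        Or.inr (Or.inl (hasTable_tbl.2 ?_))⟩
      have hs : s = - (t ^ 2 / 4) := by linear_combination hd
      subst hs
      refine ⟨?_, ?_, ?_, ?_⟩ <;>
      · simp only [map_add, map_smul, LinearMap.add_apply, LinearMap.smul_apply, he, hew, hwe, hww,
          Matrix.cons_val_zero, Matrix.cons_val_one, Pi.zero_apply]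
        module
    · obtain ⟨k, hk⟩ := IsAlgClosed.exists_eq_mul_self (s + t ^ 2 / 4)
      have hk0 : k ≠ 0 := by
        rintro rfl
        exact hd (by simpa using hk)
      have hs : s = k * k - t ^ 2 / 4 := by linear_combination hk
      subst hs
      refine ⟨(1 / 2 - t / (4 * k)) • e + (1 / (2 * k)) • w,
        (1 / 2 + t / (4 * k)) • e + (-(1 / (2 * k))) • w,
        linearIndependent_combination hw _ _ _ _ ?_, Or.inl (hasTable_tbl.2 ?_)⟩
      · field_simp
        ring_nf
        simpa using hk0
      · refine ⟨?_, ?_, ?_, ?_⟩ <;>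
        · simp only [map_add, map_smul, LinearMap.add_apply, LinearMap.smul_apply, he, hew, hwe,
            hww, Matrix.cons_val_zero, Matrix.cons_val_one, Pi.zero_apply]
          match_scalars <;> field_simp <;> ring

/-- A nonzero commutative associative algebra of dimension two is one of
`cA01`, `cA02`, `cA03`, `cA04`. -/
theorem exists_hasTable_of_comm_assoc (hdim : finrank ℂ P = 2) {μ : P →ₗ[ℂ] P →ₗ[ℂ] P}
    (hcomm : ∀ x y, μ x y = μ y x) (hassoc : ∀ x y z, μ (μ x y) z = μ x (μ y z))
    (hne : ∃ x y, μ x y ≠ 0) :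
    ∃ u v, LinearIndependent ℂ ![u, v] ∧
      (HasTable μ u v cA01 ∨ HasTable μ u v cA02 ∨ HasTable μ u v cA03 ∨
        HasTable μ u v cA04) := by
  by_cases hid : ∃ e, e ≠ 0 ∧ μ e e = e
  · obtain ⟨e, he0, he⟩ := hid
    obtain ⟨u, v, h, h'⟩ := hasTable_of_idempotent hdim hcomm hassoc he0 he
    exact ⟨u, v, h, by tauto⟩
  push Not at hid
  obtain ⟨x, hx⟩ : ∃ x, μ x x ≠ 0 := by
    by_contra! h
    obtain ⟨x, y, hxy⟩ := hne
    have h1 := h (x + y)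
    simp only [map_add, LinearMap.add_apply, h, hcomm y x] at h1
    refine hxy ((smul_eq_zero_iff_right (two_ne_zero (α := ℂ))).1 ?_)
    rw [← h1]
    module
  have hx0 : x ≠ 0 := by
    rintro rfl
    simp at hx
  have hind : LinearIndependent ℂ ![x, μ x x] := by
    rw [LinearIndependent.pair_iff' hx0]
    rintro c hc
    have hc0 : c ≠ 0 := by
      rintro rfl
      simp [← hc] at hx
    refine hid (c⁻¹ • x) (by simp [hc0, hx0]) ?_
    simp [← hc, smul_smul, hc0]
  obtain ⟨f, g, fu, fv, gu, gv, hfg⟩ := exists_coords hdim hind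
  have h3 := hfg (μ x (μ x x))
  generalize f (μ x (μ x x)) = a at h3
  generalize g (μ x (μ x x)) = b at h3
  have h3' : μ (μ x x) x = a • x + b • μ x x := by rw [hcomm, h3]
  have h4 : μ (μ x x) (μ x x) = (a * b) • x + (a + b ^ 2) • μ x x := by
    rw [hassoc, h3, map_add, map_smul, map_smul, h3]
    module
  by_cases ha : a = 0
  · subst ha
    by_cases hb : b = 0
    · subst hb
      refine ⟨x, μ x x, hind, Or.inr (Or.inr (Or.inr (hasTable_tbl.2 ?_)))⟩
      simp [h3, h3', h4]
    · refine absurd ?_ (hid ((b ^ 2)⁻¹ • μ x x) (by simp [hb, hx]))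
      simp only [map_smul, LinearMap.smul_apply, h4]
      match_scalars <;> field_simp <;> ring
  · refine absurd ?_ (hid ((-(b / a)) • x + a⁻¹ • μ x x) fun h => ?_)
    · simp only [map_add, map_smul, LinearMap.add_apply, LinearMap.smul_apply, h3, h3', h4]
      match_scalars <;> field_simp <;> ring
    · exact inv_ne_zero ha (LinearIndependent.pair_iff.1 hind _ _ h).2

/-- The pre-Lie multiplications compatible with a nonzero commutative associative
multiplication. -/
theorem exists_hasTable_of_mul_ne_zero (hdim : finrank ℂ P = 2) {μ ν : P →ₗ[ℂ] P →ₗ[ℂ] P}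
    (hcomm : ∀ x y, μ x y = μ y x) (hassoc : ∀ x y z, μ (μ x y) z = μ x (μ y z))
    (hcompat₁ : ∀ x y z, μ (ν x y) z - μ (ν y x) z = ν x (μ y z) - ν y (μ x z))
    (hcompat₂ : ∀ x y z, ν (μ x y) z = μ x (ν y z))
    (hne : ∃ x y, μ x y ≠ 0) :
    ∃ i u v, LinearIndependent ℂ ![u, v] ∧ HasTable μ u v (npMul i) ∧
      HasTable ν u v (npCirc i) := by
  obtain ⟨u, v, h, hμ⟩ := exists_hasTable_of_comm_assoc hdim hcomm hassoc hne
  obtain ⟨f, g, fu, fv, gu, gv, hfg⟩ := exists_coords hdim h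
  have huu := hfg (ν u u)
  have huv := hfg (ν u v)
  have hvu := hfg (ν v u)
  have hvv := hfg (ν v v)
  generalize f (ν u u) = a₁, g (ν u u) = a₂ at huu
  generalize f (ν u v) = b₁, g (ν u v) = b₂ at huv
  generalize f (ν v u) = c₁, g (ν v u) = c₂ at hvu
  generalize f (ν v v) = d₁, g (ν v v) = d₂ at hvv
  rcases hμ with hμ | hμ | hμ | hμ
  · obtain ⟨m₁, m₂, m₃, m₄⟩ := hasTable_tbl.1 hμ
    simp only [Matrix.cons_val_zero, Matrix.cons_val_one, Pi.zero_apply, zero_smul, one_smul,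
      add_zero, zero_add] at m₁ m₂ m₃ m₄
    have k₁ := congrArg g (hcompat₂ u u u)
    have k₂ := congrArg g (hcompat₂ u u v)
    have k₃ := congrArg f (hcompat₂ v v u)
    have k₄ := congrArg f (hcompat₂ v v v)
    have k₅ := congrArg f (hcompat₁ u v u)
    have k₆ := congrArg g (hcompat₁ u v u)
    simp only [map_add, map_sub, map_smul, LinearMap.add_apply, LinearMap.smul_apply, map_zero,
      m₁, m₂, m₃, m₄, huu, huv, hvu, hvv, fu, fv, gu, gv, smul_eq_mul, smul_zero]
      at k₁ k₂ k₃ k₄ k₅ k₆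
    have ha₂ : a₂ = 0 := by linear_combination k₁
    have hb₂ : b₂ = 0 := by linear_combination k₂
    have hc₁ : c₁ = 0 := by linear_combination k₃
    have hd₁ : d₁ = 0 := by linear_combination k₄
    have hb₁ : b₁ = 0 := by linear_combination k₅
    have hc₂ : c₂ = 0 := by linear_combination k₆
    subst ha₂ hb₂ hc₁ hd₁ hb₁ hc₂
    refine ⟨.n07 a₁ d₂, u, v, h, hμ, hasTable_tbl.2 ?_⟩
    simp [huu, huv, hvu, hvv]
  · obtain ⟨m₁, m₂, m₃, m₄⟩ := hasTable_tbl.1 hμ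
    simp only [Matrix.cons_val_zero, Matrix.cons_val_one, Pi.zero_apply, zero_smul, one_smul,
      add_zero, zero_add] at m₁ m₂ m₃ m₄
    have k₁ := congrArg f (hcompat₂ v u u)
    have k₂ := congrArg g (hcompat₂ v u u)
    have k₃ := congrArg f (hcompat₂ v u v)
    have k₄ := congrArg g (hcompat₂ v u v)
    have k₅ := congrArg g (hcompat₁ u v v)
    have k₆ := congrArg f (hcompat₁ u v v)
    simp only [map_add, map_sub, map_smul, LinearMap.add_apply, LinearMap.smul_apply, map_zero,
      m₂, m₃, m₄, huu, huv, hvu, hvv, fu, fv, gu, gv, smul_eq_mul, smul_zero]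
      at k₁ k₂ k₃ k₄ k₅ k₆
    have hc₁ : c₁ = 0 := by linear_combination k₁
    have hc₂ : c₂ = a₁ := by linear_combination k₂
    have hd₁ : d₁ = 0 := by linear_combination k₃
    have hd₂ : d₂ = b₁ := by linear_combination k₄
    have hb₁ : b₁ = 0 := by linear_combination (k₅ + hc₁ - hd₂) / 2
    subst hc₁ hc₂ hd₁ hd₂ hb₁
    by_cases ha : a₂ = 0
    · subst ha
      refine ⟨.n09 c₂ b₂, u, v, h, hμ, hasTable_tbl.2 ?_⟩
      simp [huu, huv, hvu, hvv]
    · refine ⟨.n08 c₂ b₂, (1 : ℂ) • u + (0 : ℂ) • v, (0 : ℂ) • u + a₂ • v,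
        linearIndependent_combination h _ _ _ _ (by simp [ha]), hasTable_tbl.2 ?_,
        hasTable_tbl.2 ?_⟩ <;>
      refine ⟨?_, ?_, ?_, ?_⟩ <;>
      · simp only [map_add, map_smul, LinearMap.add_apply, LinearMap.smul_apply, huu, huv, hvu, hvv,
          m₁, m₂, m₃, m₄, Matrix.cons_val_zero, Matrix.cons_val_one, Pi.zero_apply]
        match_scalars <;> field_simp <;> ring
  · obtain ⟨m₁, m₂, m₃, m₄⟩ := hasTable_tbl.1 hμ
    simp only [Matrix.cons_val_zero, Matrix.cons_val_one, Pi.zero_apply, zero_smul, one_smul,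
      add_zero] at m₁ m₂ m₃ m₄
    have k₁ := congrArg g (hcompat₂ u u u)
    have k₂ := congrArg g (hcompat₂ u u v)
    have k₃ := congrArg f (hcompat₂ u v u)
    have k₄ := congrArg f (hcompat₂ u v v)
    have k₅ := congrArg f (hcompat₁ u v u)
    have k₆ := congrArg g (hcompat₁ u v u)
    simp only [map_add, map_sub, map_smul, LinearMap.add_apply, LinearMap.smul_apply, map_zero,
      LinearMap.zero_apply, m₁, m₂, m₃, huu, huv, hvu, hvv, fu, fv, gu, gv, smul_eq_mul, smul_zero]
      at k₁ k₂ k₃ k₄ k₅ k₆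
    have ha₂ : a₂ = 0 := by linear_combination k₁
    have hb₂ : b₂ = 0 := by linear_combination k₂
    have hc₁ : c₁ = 0 := by linear_combination -k₃
    have hd₁ : d₁ = 0 := by linear_combination -k₄
    have hb₁ : b₁ = 0 := by linear_combination k₅
    have hc₂ : c₂ = 0 := by linear_combination k₆
    subst ha₂ hb₂ hc₁ hd₁ hb₁ hc₂
    by_cases hd : d₂ = 0
    · subst hd
      refine ⟨.n11 a₁, u, v, h, hμ, hasTable_tbl.2 ?_⟩
      simp [huu, huv, hvu, hvv]
    · refine ⟨.n10 a₁, (1 : ℂ) • u + (0 : ℂ) • v, (0 : ℂ) • u + d₂⁻¹ • v,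
        linearIndependent_combination h _ _ _ _ (by simp [hd]), hasTable_tbl.2 ?_,
        hasTable_tbl.2 ?_⟩ <;>
      refine ⟨?_, ?_, ?_, ?_⟩ <;>
      · simp only [map_add, map_smul, LinearMap.add_apply, LinearMap.smul_apply, huu, huv, hvu, hvv,
          m₁, m₂, m₃, m₄, Matrix.cons_val_zero, Matrix.cons_val_one, Pi.zero_apply]
        match_scalars <;> field_simp <;> ring
  · obtain ⟨m₁, m₂, m₃, m₄⟩ := hasTable_tbl.1 hμ
    simp only [Matrix.cons_val_zero, Matrix.cons_val_one, Pi.zero_apply, zero_smul, one_smul,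
      add_zero, zero_add] at m₁ m₂ m₃ m₄
    have k₁ := congrArg f (hcompat₂ u u u)
    have k₂ := congrArg g (hcompat₂ u u u)
    have k₃ := congrArg f (hcompat₂ u u v)
    have k₄ := congrArg g (hcompat₂ u u v)
    have k₅ := congrArg g (hcompat₁ u v u)
    have k₆ := congrArg f (hcompat₁ u v u)
    simp only [map_add, map_sub, map_smul, LinearMap.add_apply, LinearMap.smul_apply, map_zero,
      m₁, m₂, m₃, huu, huv, hvu, hvv, fu, fv, gu, gv, smul_eq_mul, smul_zero]
      at k₁ k₂ k₃ k₄ k₅ k₆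
    have hc₁ : c₁ = 0 := by linear_combination k₁
    have hc₂ : c₂ = a₁ := by linear_combination k₂
    have hd₁ : d₁ = 0 := by linear_combination k₃
    have hd₂ : d₂ = b₁ := by linear_combination k₄
    have hb₁ : b₁ = 0 := by linear_combination (k₅ + hc₁ - hd₂) / 2
    subst hc₁ hc₂ hd₁ hd₂ hb₁
    by_cases hb : b₂ = 0
    · subst hb
      by_cases hc : c₂ = 0
      · subst hc
        refine ⟨.n14 a₂, u, v, h, hμ, hasTable_tbl.2 ?_⟩
        simp [huu, huv, hvu, hvv]
      · refine ⟨.n13 a₂, c₂⁻¹ • u + (0 : ℂ) • v, (0 : ℂ) • u + (c₂ ^ 2)⁻¹ • v,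
          linearIndependent_combination h _ _ _ _ (by simp [hc]), hasTable_tbl.2 ?_,
          hasTable_tbl.2 ?_⟩ <;>
        refine ⟨?_, ?_, ?_, ?_⟩ <;>
        · simp only [map_add, map_smul, LinearMap.add_apply, LinearMap.smul_apply, huu, huv, hvu, hvv,
            m₁, m₂, m₃, m₄, Matrix.cons_val_zero, Matrix.cons_val_one, Pi.zero_apply]
          match_scalars <;> field_simp <;> ring
    · refine ⟨.n12 (c₂ / b₂), b₂⁻¹ • u + (-(a₂ / b₂ ^ 2)) • v, (0 : ℂ) • u + (b₂ ^ 2)⁻¹ • v,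
        linearIndependent_combination h _ _ _ _ (by simp [hb]), hasTable_tbl.2 ?_,
        hasTable_tbl.2 ?_⟩ <;>
      refine ⟨?_, ?_, ?_, ?_⟩ <;>
      · simp only [map_add, map_smul, LinearMap.add_apply, LinearMap.smul_apply, huu, huv, hvu, hvv,
          m₁, m₂, m₃, m₄, Matrix.cons_val_zero, Matrix.cons_val_one, Pi.zero_apply]
        match_scalars <;> field_simp <;> ring

/-- A nonzero two-dimensional pre-Lie algebra whose multiplication is commutative is a
Novikov algebra. -/
theorem exists_novAlg_of_comm (hdim : finrank ℂ P = 2) {ν : P →ₗ[ℂ] P →ₗ[ℂ] P}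
    (hpre : ∀ x y z, ν (ν x y) z - ν (ν y x) z = ν x (ν y z) - ν y (ν x z))
    (hcomm : ∀ x y, ν x y = ν y x) (hne : ∃ x y, ν x y ≠ 0) :
    ∃ i u v, LinearIndependent ℂ ![u, v] ∧ HasTable ν u v (novAlg i) := by
  have hassoc : ∀ x y z, ν (ν x y) z = ν x (ν y z) := fun x y z => by
    have h := hpre x z y
    rw [hcomm z x, sub_self] at h
    rw [hcomm (ν x y) z, hcomm y z, sub_eq_zero.1 h.symm]
  obtain ⟨u, v, h, hν | hν | hν | hν⟩ := exists_hasTable_of_comm_assoc hdim hcomm hassoc hne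
  · exact ⟨Sum.inl 2, u, v, h, hν⟩
  · obtain ⟨m₁, m₂, m₃, m₄⟩ := hasTable_tbl.1 hν
    refine ⟨Sum.inr 1, v, u, LinearIndependent.pair_symm_iff.1 h, hasTable_tbl.2 ?_⟩
    simp [m₁, m₂, m₃, m₄]
  · exact ⟨Sum.inl 3, u, v, h, hν⟩
  · exact ⟨Sum.inl 0, u, v, h, hν⟩

/-- A noncommutative algebra of dimension two has a basis `u`, `v` whose commutator
is `u`. -/
theorem exists_commutator_eq (hdim : finrank ℂ P = 2) {ν : P →ₗ[ℂ] P →ₗ[ℂ] P}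
    (hne : ∃ x y, ν x y ≠ ν y x) :
    ∃ u v, LinearIndependent ℂ ![u, v] ∧ ν u v - ν v u = u := by
  obtain ⟨x, y, hxy⟩ := hne
  have hx0 : x ≠ 0 := by
    rintro rfl
    simp at hxy
  have hind : LinearIndependent ℂ ![x, y] := by
    rw [LinearIndependent.pair_iff' hx0]
    rintro c rfl
    simp at hxy
  obtain ⟨f, g, -, -, -, -, hfg⟩ := exists_coords hdim hind
  have hu := hfg (ν x y - ν y x)
  generalize f (ν x y - ν y x) = p, g (ν x y - ν y x) = q at hu
  by_cases hp : p = 0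
  · subst hp
    have hq : q ≠ 0 := by
      rintro rfl
      exact hxy (sub_eq_zero.1 (by simp [hu]))
    refine ⟨(0 : ℂ) • x + q • y, (-q⁻¹) • x + (0 : ℂ) • y,
      linearIndependent_combination hind _ _ _ _ (by simp [hq]), ?_⟩
    conv_rhs => rw [← hu]
    simp only [map_add, map_smul, LinearMap.add_apply, LinearMap.smul_apply]
    match_scalars <;> field_simp <;> ring
  · refine ⟨p • x + q • y, (0 : ℂ) • x + p⁻¹ • y,
      linearIndependent_combination hind _ _ _ _ (by simp [hp]), ?_⟩
    conv_rhs => rw [← hu]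
    simp only [map_add, map_smul, LinearMap.add_apply, LinearMap.smul_apply]
    match_scalars <;> field_simp <;> ring

/-- The noncommutative two-dimensional pre-Lie algebras. -/
theorem exists_hasTable_of_not_comm (hdim : finrank ℂ P = 2) {ν : P →ₗ[ℂ] P →ₗ[ℂ] P}
    (hpre : ∀ x y z, ν (ν x y) z - ν (ν y x) z = ν x (ν y z) - ν y (ν x z))
    (hne : ∃ x y, ν x y ≠ ν y x) :
    ∃ u v, LinearIndependent ℂ ![u, v] ∧
      ((∃ i, HasTable ν u v (novAlg i)) ∨
        (∃ α : ℂ, α ≠ 0 ∧ HasTable ν u v (tbl 0 0 ![-1,0] ![0,α])) ∨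
        HasTable ν u v (tbl ![0,1] 0 ![-1,0] ![0,-2]) ∨
        HasTable ν u v (tbl 0 0 ![-1,0] ![1,-1])) := by
  obtain ⟨u, v, h, huv⟩ := exists_commutator_eq hdim hne
  obtain ⟨f, g, fu, fv, gu, gv, hfg⟩ := exists_coords hdim h
  have huu := hfg (ν u u)
  have hvu := hfg (ν v u)
  have hvv := hfg (ν v v)
  generalize f (ν u u) = a₁, g (ν u u) = a₂ at huu
  generalize f (ν v u) = c₁, g (ν v u) = c₂ at hvu
  generalize f (ν v v) = d₁, g (ν v v) = d₂ at hvv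
  have huv : ν u v = (c₁ + 1) • u + c₂ • v := by
    rw [sub_eq_iff_eq_add.1 huv, hvu]
    module
  have k₁ := congrArg f (hpre u v u)
  have k₂ := congrArg g (hpre u v u)
  have k₃ := congrArg f (hpre u v v)
  have k₄ := congrArg g (hpre u v v)
  simp only [map_add, map_sub, map_smul, LinearMap.add_apply, LinearMap.smul_apply,
    huu, huv, hvu, hvv, fu, fv, gu, gv, smul_eq_mul] at k₁ k₂ k₃ k₄
  by_cases ha : a₂ = 0
  · subst ha
    have hc₂ : c₂ = 0 := by
      have : c₂ * c₂ = 0 := by linear_combination (c₂ * k₄ + c₂ * k₁ - k₂) / 2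
      simpa using this
    subst hc₂
    have ha₁ : a₁ = 0 := by linear_combination k₁
    subst ha₁
    have hc : (c₁ + 1) * (d₂ - c₁ - 1) = 0 := by linear_combination -k₃
    by_cases hc' : c₁ + 1 = 0
    · obtain rfl : c₁ = -1 := by linear_combination hc'
      by_cases hd : d₂ = -1
      · subst hd
        by_cases hd₁ : d₁ = 0
        · subst hd₁
          refine ⟨u, v, h, Or.inr (Or.inl ⟨-1, by simp, hasTable_tbl.2 ?_⟩)⟩
          simp [huu, huv, hvu, hvv]
        · refine ⟨d₁ • u + (0 : ℂ) • v, (0 : ℂ) • u + (1 : ℂ) • v,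
            linearIndependent_combination h _ _ _ _ (by simp [hd₁]),
            Or.inr (Or.inr (Or.inr (hasTable_tbl.2 ?_)))⟩
          simp [huu, huv, hvu, hvv]
      · have hd' : 1 + d₂ ≠ 0 := fun h => hd (by linear_combination h)
        have hli := linearIndependent_combination h 1 0 (d₁ / (1 + d₂)) 1 (by simp)
        have htab : HasTable ν ((1 : ℂ) • u + (0 : ℂ) • v) ((d₁ / (1 + d₂)) • u + (1 : ℂ) • v)
            (tbl 0 0 ![-1,0] ![0,d₂]) := by
          refine hasTable_tbl.2 ⟨?_, ?_, ?_, ?_⟩ <;>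
          · simp only [map_add, map_smul, LinearMap.add_apply, LinearMap.smul_apply, huu, huv, hvu,
              hvv, Matrix.cons_val_zero, Matrix.cons_val_one, Pi.zero_apply]
            match_scalars <;> field_simp <;> ring
        by_cases hd₂ : d₂ = 0
        · subst hd₂
          refine ⟨_, _, hli, Or.inl ⟨Sum.inl 1, ?_⟩⟩
          rwa [show (![0, 0] : V2) = 0 by ext i; fin_cases i <;> rfl] at htab
        · exact ⟨_, _, hli, Or.inr (Or.inl ⟨d₂, hd₂, htab⟩)⟩
    · have hd₂ : d₂ ≠ 0 := by
        rintro rfl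
        refine hc' (mul_self_eq_zero.1 ?_)
        linear_combination -hc
      replace hc := (mul_eq_zero.1 hc).resolve_left hc'
      obtain rfl : c₁ = d₂ - 1 := by linear_combination -hc
      by_cases hd : d₂ = 1
      · subst hd
        by_cases hd₁ : d₁ = 0
        · subst hd₁
          refine ⟨u, v, h, Or.inl ⟨Sum.inr 0, hasTable_tbl.2 ?_⟩⟩
          simp [huu, huv, hvu, hvv]
        · refine ⟨d₁ • u + (0 : ℂ) • v, (0 : ℂ) • u + (1 : ℂ) • v,
            linearIndependent_combination h _ _ _ _ (by simp [hd₁]),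
            Or.inl ⟨Sum.inl 4, hasTable_tbl.2 ?_⟩⟩
          simp [huu, huv, hvu, hvv]
      · have hd' : d₂ - 1 ≠ 0 := sub_ne_zero.2 hd
        refine ⟨(1 : ℂ) • u + (0 : ℂ) • v, (-(d₁ / (d₂ * (d₂ - 1)))) • u + d₂⁻¹ • v,
          linearIndependent_combination h _ _ _ _ (by simp [hd₂]),
          Or.inl ⟨Sum.inr ((d₂ - 1) / d₂), hasTable_tbl.2 ⟨?_, ?_, ?_, ?_⟩⟩⟩ <;>
        · simp only [map_add, map_smul, LinearMap.add_apply, LinearMap.smul_apply, huu, huv, hvu,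
            hvv, Matrix.cons_val_zero, Matrix.cons_val_one, Pi.zero_apply]
          match_scalars <;> field_simp <;> ring
  · obtain ⟨s, rfl⟩ : ∃ s, a₁ = s * a₂ := ⟨a₁ / a₂, (div_mul_cancel₀ _ ha).symm⟩
    obtain rfl : c₂ = -(s * a₂) := by linear_combination k₁ + k₄
    obtain rfl : d₁ = -(c₁ + 2) * s := mul_left_cancel₀ ha (by linear_combination -k₄)
    obtain rfl : d₂ = c₁ - 1 + 2 * s ^ 2 * a₂ := mul_left_cancel₀ ha (by linear_combination k₂)
    obtain rfl : c₁ = -1 - s ^ 2 * a₂ := by linear_combination k₃ / 2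
    obtain ⟨r, rfl⟩ := IsAlgClosed.exists_eq_mul_self a₂
    have hr : r ≠ 0 := fun h => ha (by simp [h])
    refine ⟨r⁻¹ • u + (0 : ℂ) • v, s • u + (1 : ℂ) • v,
      linearIndependent_combination h _ _ _ _ (by simp [hr]),
      Or.inr (Or.inr (Or.inl (hasTable_tbl.2 ⟨?_, ?_, ?_, ?_⟩)))⟩ <;>
    · simp only [map_add, map_smul, LinearMap.add_apply, LinearMap.smul_apply, huu, huv, hvu,
        hvv, Matrix.cons_val_zero, Matrix.cons_val_one, Pi.zero_apply]
      match_scalars <;> field_simp <;> ring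

end Classification

/-- Every nonzero 2-dimensional pre-Lie Poisson algebra over ℂ is
isomorphic to one of the Novikov–Poisson algebras (N01–N06^γ with `· ≡ 0`, or N07–N14),
or to one of the pre-Lie (non-Novikov) algebras P01^α (α ≠ 0), P02, P03 with `· ≡ 0`. -/
theorem statement12 (P : Type*) [AddCommGroup P] [Module ℂ P]
    (hdim : Module.finrank ℂ P = 2)
    (mul circ : P →ₗ[ℂ] P →ₗ[ℂ] P)
    (hcomm : ∀ x y : P, mul x y = mul y x)
    (hassoc : ∀ x y z : P, mul (mul x y) z = mul x (mul y z))
    (hpre : ∀ x y z : P, circ (circ x y) z - circ (circ y x) z =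
      circ x (circ y z) - circ y (circ x z))
    (hcompat₁ : ∀ x y z : P, mul (circ x y) z - mul (circ y x) z =
      circ x (mul y z) - circ y (mul x z))
    (hcompat₂ : ∀ x y z : P, circ (mul x y) z = mul x (circ y z))
    (hnz : (∃ x y : P, mul x y ≠ 0) ∨ (∃ x y : P, circ x y ≠ 0)) :
    (∃ i : Fin 5 ⊕ ℂ, Iso2 (fun x y => mul x y) (fun x y => circ x y)
        zm (tm (novAlg i))) ∨
    (∃ i : NPIdx, Iso2 (fun x y => mul x y) (fun x y => circ x y)
        (tm (npMul i)) (tm (npCirc i))) ∨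
    -- P01^α, α ≠ 0 : e2∘e1 = -e1, e2∘e2 = α e2
    (∃ α : ℂ, α ≠ 0 ∧ Iso2 (fun x y => mul x y) (fun x y => circ x y)
        zm (tm (tbl 0 0 ![-1,0] ![0,α]))) ∨
    -- P02 : e1∘e1 = e2, e2∘e1 = -e1, e2∘e2 = -2e2
    Iso2 (fun x y => mul x y) (fun x y => circ x y)
        zm (tm (tbl ![0,1] 0 ![-1,0] ![0,-2])) ∨
    -- P03 : e2∘e1 = -e1, e2∘e2 = e1 - e2
    Iso2 (fun x y => mul x y) (fun x y => circ x y)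
        zm (tm (tbl 0 0 ![-1,0] ![1,-1])) := by
  by_cases hmul : ∃ x y, mul x y ≠ 0
  · obtain ⟨i, u, v, h, h₁, h₂⟩ :=
      exists_hasTable_of_mul_ne_zero hdim hcomm hassoc hcompat₁ hcompat₂ hmul
    exact Or.inr (Or.inl ⟨i, iso2_of_hasTable hdim h h₁ h₂⟩)
  have hcirc := hnz.resolve_left hmul
  push Not at hmul
  by_cases hc : ∀ x y, circ x y = circ y x
  · obtain ⟨i, u, v, h, h₁⟩ := exists_novAlg_of_comm hdim hpre hc hcirc
    exact Or.inl ⟨i, iso2_zm_of_hasTable hdim hmul h h₁⟩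
  push Not at hc
  obtain ⟨u, v, h, ⟨i, h₁⟩ | ⟨α, hα, h₁⟩ | h₁ | h₁⟩ := exists_hasTable_of_not_comm hdim hpre hc
  · exact Or.inl ⟨i, iso2_zm_of_hasTable hdim hmul h h₁⟩
  · exact Or.inr (Or.inr (Or.inl ⟨α, hα, iso2_zm_of_hasTable hdim hmul h h₁⟩))
  · exact Or.inr (Or.inr (Or.inr (Or.inl (iso2_zm_of_hasTable hdim hmul h h₁))))
  · exact Or.inr (Or.inr (Or.inr (Or.inr (iso2_zm_of_hasTable hdim hmul h h₁))))
end
end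

section
/- Every nonzero 2-dimensional pre-Lie algebra over ℂ is isomorphic to exactly one of the following algebras, given by a multiplication table on a basis e1, e2 (all unlisted products of basis elements are zero): C01: e1∘e1 = e1 + e2, e2∘e1 = e2; C02: e1∘e1 = e1 + e2, e1∘e2 = e2; C03: e1∘e1 = e2; C04: e2∘e1 = e1; C05^α (α ∈ ℂ): e1∘e1 = e1, e1∘e2 = α·e2; C06^α (α ∈ ℂ): e1∘e1 = e1, e1∘e2 = α·e2, e2∘e1 = e2; C07: e1∘e1 = e1, e2∘e2 = e2; C08: e1∘e1 = e1, e1∘e2 = 2·e2, e2∘e1 = (1/2)·e1 + e2, e2∘e2 = e2. These algebras are pairwise non-isomorphic, and within the families C05^α and C06^α distinct parameters give non-isomorphic algebras. -/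
noncomputable section

/-- Index of the nonzero 2-dimensional pre-Lie algebras C01–C08. -/
inductive PLIdx : Type
  | c01 | c02 | c03 | c04
  | c05 (α : ℂ)
  | c06 (α : ℂ)
  | c07 | c08

/-- The multiplication tables of the nonzero 2-dimensional pre-Lie algebras C01–C08. -/
def plAlg : PLIdx → Fin 2 → Fin 2 → V2
  | .c01 => tbl ![1,1] 0 ![0,1] 0            -- e1∘e1 = e1+e2, e2∘e1 = e2
  | .c02 => tbl ![1,1] ![0,1] 0 0            -- e1∘e1 = e1+e2, e1∘e2 = e2
  | .c03 => tbl ![0,1] 0 0 0                 -- e1∘e1 = e2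
  | .c04 => tbl 0 0 ![1,0] 0                 -- e2∘e1 = e1
  | .c05 α => tbl ![1,0] ![0,α] 0 0          -- e1∘e1 = e1, e1∘e2 = α e2
  | .c06 α => tbl ![1,0] ![0,α] ![0,1] 0     -- e1∘e1 = e1, e1∘e2 = α e2, e2∘e1 = e2
  | .c07 => tbl ![1,0] 0 0 ![0,1]            -- e1∘e1 = e1, e2∘e2 = e2
  | .c08 => tbl ![1,0] ![0,2] ![1/2,1] ![0,1]

section Classification

variable {C : Type*} [AddCommGroup C] [Module ℂ C]

theorem exists_coords_of_linearIndependent_pair (hdim : Module.finrank ℂ C = 2) {u v : C}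
    (huv : LinearIndependent ℂ ![u, v]) (x : C) : ∃ s t : ℂ, x = s • u + t • v := by
  have : FiniteDimensional ℂ C := Module.finite_of_finrank_eq_succ hdim
  have hs := huv.span_eq_top_of_card_eq_finrank' (by simp [hdim])
  have hx : x ∈ Submodule.span ℂ (Set.range ![u, v]) := hs ▸ Submodule.mem_top
  rw [Matrix.range_cons, Matrix.range_cons, Matrix.range_empty, Set.union_empty,
    Set.singleton_union, Submodule.mem_span_pair] at hx
  obtain ⟨s, t, h⟩ := hx
  exact ⟨s, t, h.symm⟩

theorem exists_linearIndependent_pair_of_ne_zero (hdim : Module.finrank ℂ C = 2) {u : C}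
    (hu : u ≠ 0) : ∃ v : C, LinearIndependent ℂ ![u, v] :=
  exists_linearIndependent_pair_of_one_lt_finrank (by omega) hu

theorem coeff_eq_of_linearIndependent_pair {u v : C} (huv : LinearIndependent ℂ ![u, v])
    {s t s' t' : ℂ} (h : s • u + t • v = s' • u + t' • v) : s = s' ∧ t = t' :=
  LinearIndependent.pair_iffₛ.1 huv s t s' t' h

theorem iso1_tbl_of_linearIndependent_pair (hdim : Module.finrank ℂ C = 2)
    (circ : C →ₗ[ℂ] C →ₗ[ℂ] C) {u v : C} (huv : LinearIndependent ℂ ![u, v]) {a b c d : V2}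
    (huu : circ u u = a 0 • u + a 1 • v) (huv' : circ u v = b 0 • u + b 1 • v)
    (hvu : circ v u = c 0 • u + c 1 • v) (hvv : circ v v = d 0 • u + d 1 • v) :
    Iso1 (fun x y => circ x y) (tm (tbl a b c d)) := by
  let B := basisOfLinearIndependentOfCardEqFinrank huv (by simp [hdim])
  have hB0 : B.equivFun u = ![1, 0] := by
    have : u = B 0 := by simp [B]
    rw [this]; ext k; fin_cases k <;> simp [B.equivFun_self]
  have hB1 : B.equivFun v = ![0, 1] := by
    have : v = B 1 := by simp [B]
    rw [this]; ext k; fin_cases k <;> simp [B.equivFun_self]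
  refine ⟨B.equivFun, fun x y => ?_⟩
  obtain ⟨x₀, x₁, rfl⟩ := exists_coords_of_linearIndependent_pair hdim huv x
  obtain ⟨y₀, y₁, rfl⟩ := exists_coords_of_linearIndependent_pair hdim huv y
  simp only [map_add, map_smul, LinearMap.add_apply, LinearMap.smul_apply, huu, huv', hvu, hvv,
    hB0, hB1]
  ext k
  fin_cases k <;> simp [tm, tbl] <;> ring

theorem exists_linearIndependent_sq (hdim : Module.finrank ℂ C = 2)
    (circ : C →ₗ[ℂ] C →ₗ[ℂ] C)
    (hpre : ∀ x y z : C, circ (circ x y) z - circ (circ y x) z =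
      circ x (circ y z) - circ y (circ x z))
    (hcomm : ∀ x y, circ x y = circ y x) (hnz : ∃ x y : C, circ x y ≠ 0) :
    ∃ x, LinearIndependent ℂ ![x, circ x x] := by
  by_contra! hdep
  have hsq (x : C) (hx : x ≠ 0) : ∃ t : ℂ, circ x x = t • x := by
    have h := hdep x
    rw [LinearIndependent.pair_iff' hx] at h
    push Not at h
    exact h.imp fun _ => Eq.symm
  obtain ⟨x, y, hxy⟩ := hnz
  have hx : x ≠ 0 := by rintro rfl; simp at hxy
  obtain ⟨w, hw⟩ := exists_linearIndependent_pair_of_ne_zero hdim hx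
  have hne (s t : ℂ) (hs : s ≠ 0 ∨ t ≠ 0) : s • x + t • w ≠ 0 := fun h => by
    have := LinearIndependent.pair_iff.1 hw s t h
    tauto
  obtain ⟨a, ha⟩ := hsq x hx
  obtain ⟨d, hd⟩ := hsq w (by simpa using hne 0 1 (by simp))
  obtain ⟨t, ht⟩ := hsq ((1 : ℂ) • x + (1 : ℂ) • w) (hne 1 1 (by simp))
  obtain ⟨s, hs⟩ := hsq ((1 : ℂ) • x + (-1 : ℂ) • w) (hne 1 (-1) (by simp))
  obtain ⟨p, q, hpq⟩ := exists_coords_of_linearIndependent_pair hdim hw (circ x w)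
  have h3 := hpre x w x
  have h4 := hpre x w w
  simp only [map_add, map_smul, LinearMap.add_apply, LinearMap.smul_apply, ha, hd, hpq,
    hcomm w x] at ht hs h3 h4
  have ht' := coeff_eq_of_linearIndependent_pair hw (s := a + 2 * p) (t := d + 2 * q) (s' := t)
    (t' := t) (by linear_combination (norm := module) ht)
  have hs' := coeff_eq_of_linearIndependent_pair hw (s := a - 2 * p) (t := d - 2 * q) (s' := s)
    (t' := -s) (by linear_combination (norm := module) hs)
  have h3' := coeff_eq_of_linearIndependent_pair hw (s := p * a + q * p) (t := q * q)
    (s' := a * p) (t' := a * q) (by linear_combination (norm := module) -h3)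
  have h4' := coeff_eq_of_linearIndependent_pair hw (s := d * p) (t := d * q)
    (s' := p * p) (t' := p * q + q * d) (by linear_combination (norm := module) -h4)
  have ha0 : a = 0 := by grind
  have hd0 : d = 0 := by grind
  have hp0 : p = 0 := by grind
  have hq0 : q = 0 := by grind
  obtain ⟨y₀, y₁, rfl⟩ := exists_coords_of_linearIndependent_pair hdim hw y
  simp [ha, hpq, ha0, hp0, hq0] at hxy

theorem exists_iso1_plAlg_of_comm (hdim : Module.finrank ℂ C = 2)
    (circ : C →ₗ[ℂ] C →ₗ[ℂ] C)
    (hpre : ∀ x y z : C, circ (circ x y) z - circ (circ y x) z =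
      circ x (circ y z) - circ y (circ x z))
    (hcomm : ∀ x y, circ x y = circ y x) (hnz : ∃ x y : C, circ x y ≠ 0) :
    ∃ i : PLIdx, Iso1 (fun x y => circ x y) (tm (plAlg i)) := by
  obtain ⟨x, hx⟩ := exists_linearIndependent_sq hdim circ hpre hcomm hnz
  generalize hy : circ x x = y at hx
  obtain ⟨b, a, hxy⟩ := exists_coords_of_linearIndependent_pair hdim hx (circ x y)
  have hyx : circ y x = b • x + a • y := by rw [hcomm, hxy]
  have hyy : circ y y = (a * b) • x + (b + a * a) • y := by
    have h := hpre x y x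
    simp only [hxy, hyx, hy, map_add, map_smul] at h
    linear_combination (norm := module) h
  have iso (p q r s : ℂ) (hdet : p * s - q * r ≠ 0) {c₀ c₁ c₂ c₃ : V2} :=
    iso1_tbl_of_linearIndependent_pair hdim circ
      (LinearIndependent.pair_add_smul_add_smul_iff p q r s |>.2 ⟨hx, sub_ne_zero.1 hdet⟩) (a := c₀) (b := c₁) (c := c₂) (d := c₃)
  simp only [map_add, map_smul, LinearMap.add_apply, LinearMap.smul_apply, hy, hxy, hyx,
    hyy] at iso
  by_cases hb : b = 0
  · subst hb
    by_cases ha : a = 0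
    · subst ha
      refine ⟨.c03, iso 1 0 0 1 (by simp) ?_ ?_ ?_ ?_⟩ <;> simp
    · refine ⟨.c05 0, iso 0 (1 / a ^ 2) 1 (-1 / a) (by simp [ha]) ?_ ?_ ?_ ?_⟩ <;> simp <;>
        match_scalars <;> field_simp <;> ring
  · obtain ⟨δ, hδ⟩ := IsAlgClosed.exists_pow_nat_eq (a ^ 2 + 4 * b) two_pos
    obtain ⟨r, hr⟩ : ∃ r, r = (a + δ) / 2 := ⟨_, rfl⟩
    obtain ⟨s, hs⟩ : ∃ s, s = (a - δ) / 2 := ⟨_, rfl⟩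
    obtain rfl : a = r + s := by grind
    obtain rfl : b = -(r * s) := by grind
    have hr0 : r ≠ 0 := by grind
    have hs0 : s ≠ 0 := by grind
    by_cases hrs : r = s
    · subst hrs
      refine ⟨.c06 1, iso (2 / r) (-1 / r ^ 2) (-1) (1 / r) (by field_simp; norm_num [hr0])
        ?_ ?_ ?_ ?_⟩ <;> simp <;> match_scalars <;> field_simp <;> ring
    · have hrs' : r - s ≠ 0 := sub_ne_zero.2 hrs
      refine ⟨.c07, iso (-s / (r * (r - s))) (1 / (r * (r - s))) (r / (s * (r - s)))
        (-1 / (s * (r - s))) (by field_simp; grind) ?_ ?_ ?_ ?_⟩ <;>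
        simp <;> match_scalars <;> field_simp <;> ring

theorem exists_linearIndependent_sub_eq (hdim : Module.finrank ℂ C = 2)
    (circ : C →ₗ[ℂ] C →ₗ[ℂ] C) (hcomm : ¬ ∀ x y, circ x y = circ y x) :
    ∃ x y, LinearIndependent ℂ ![x, y] ∧ circ x y - circ y x = x := by
  push Not at hcomm
  obtain ⟨u, v, huv⟩ := hcomm
  obtain ⟨w, hw⟩ := exists_linearIndependent_pair_of_ne_zero hdim (sub_ne_zero.2 huv)
  generalize he : circ u v - circ v u = e at hw
  obtain ⟨p, q, rfl⟩ := exists_coords_of_linearIndependent_pair hdim hw u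
  obtain ⟨r, s, rfl⟩ := exists_coords_of_linearIndependent_pair hdim hw v
  simp only [map_add, map_smul, LinearMap.add_apply, LinearMap.smul_apply] at he
  have hk : (p * s - q * r) • (circ e w - circ w e) = e := by
    linear_combination (norm := module) he
  have hk0 : p * s - q * r ≠ 0 := by
    intro h0
    rw [h0, zero_smul] at hk
    exact hw.ne_zero 0 hk.symm
  refine ⟨e, (p * s - q * r) • w, ?_, ?_⟩
  · simpa using (LinearIndependent.pair_add_smul_add_smul_iff 1 0 0 (p * s - q * r)).2
      ⟨hw, by simpa using hk0⟩
  · simpa [smul_sub] using hk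

theorem exists_iso1_plAlg_of_not_comm (hdim : Module.finrank ℂ C = 2)
    (circ : C →ₗ[ℂ] C →ₗ[ℂ] C)
    (hpre : ∀ x y z : C, circ (circ x y) z - circ (circ y x) z =
      circ x (circ y z) - circ y (circ x z))
    (hcomm : ¬ ∀ x y, circ x y = circ y x) :
    ∃ i : PLIdx, Iso1 (fun x y => circ x y) (tm (plAlg i)) := by
  obtain ⟨x, y, hx, hxy⟩ := exists_linearIndependent_sub_eq hdim circ hcomm
  have iso (p q r s : ℂ) (hdet : p * s - q * r ≠ 0) {c₀ c₁ c₂ c₃ : V2} :=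
    iso1_tbl_of_linearIndependent_pair hdim circ
      (LinearIndependent.pair_add_smul_add_smul_iff p q r s |>.2 ⟨hx, sub_ne_zero.1 hdet⟩)
      (a := c₀) (b := c₁) (c := c₂) (d := c₃)
  obtain ⟨a, b, h11⟩ := exists_coords_of_linearIndependent_pair hdim hx (circ x x)
  obtain ⟨c, d, h12⟩ := exists_coords_of_linearIndependent_pair hdim hx (circ x y)
  obtain ⟨p, q, h22⟩ := exists_coords_of_linearIndependent_pair hdim hx (circ y y)
  have h21 : circ y x = (c - 1) • x + d • y := by
    linear_combination (norm := module) h12 - hxy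
  simp only [map_add, map_smul, LinearMap.add_apply, LinearMap.smul_apply, h11, h12, h21,
    h22] at iso
  have hx1 := hpre x y x
  have hx2 := hpre x y y
  rw [← LinearMap.sub_apply, ← map_sub, hxy] at hx1 hx2
  simp only [map_add, map_smul, h11, h12, h21, h22] at hx1 hx2
  obtain ⟨e1, e2⟩ := coeff_eq_of_linearIndependent_pair hx (s := a) (t := b)
    (s' := d * c - b * p) (t' := (c - 1) * b + d * d - a * d - b * q)
    (by linear_combination (norm := module) hx1)
  obtain ⟨e3, e4⟩ := coeff_eq_of_linearIndependent_pair hx (s := c) (t := d)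
    (s' := p * a + q * c - c * (c - 1) - d * p) (t' := p * b - c * d)
    (by linear_combination (norm := module) hx2)
  obtain rfl : d = -a := by linear_combination e4 + e1
  by_cases hb : b = 0
  · subst hb
    obtain rfl : a = 0 := by grind
    by_cases hc : c = 0
    · subst hc
      by_cases hq : q = -1
      · subst hq
        by_cases hp : p = 0
        · subst hp
          refine ⟨.c05 1, iso 0 (-1) 1 0 (by simp) ?_ ?_ ?_ ?_⟩ <;> simp
        · refine ⟨.c02, iso 0 (-1) p 0 (by simpa) ?_ ?_ ?_ ?_⟩ <;> simp <;> abel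
      · have hq' : q + 1 ≠ 0 := fun h => hq (eq_neg_of_add_eq_zero_left h)
        by_cases hq0 : q = 0
        · subst hq0
          refine ⟨.c04, iso 1 0 (-p) (-1) (by simp) ?_ ?_ ?_ ?_⟩ <;> simp
        · refine ⟨.c05 (-1 / q), iso (p / (q * (q + 1))) (1 / q) 1 0 (by simpa) ?_ ?_ ?_ ?_⟩ <;>
            simp <;> match_scalars <;> field_simp <;> ring
    · obtain rfl : q = c := by grind
      by_cases hq : q = 1
      · subst hq
        by_cases hp : p = 0
        · subst hp
          refine ⟨.c06 0, iso 0 1 1 0 (by simp) ?_ ?_ ?_ ?_⟩ <;> simp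
        · refine ⟨.c01, iso 0 1 p 0 (by simpa) ?_ ?_ ?_ ?_⟩ <;> simp <;> module
      · have hq' : 1 - q ≠ 0 := sub_ne_zero.2 (Ne.symm hq)
        refine ⟨.c06 ((q - 1) / q), iso (p / (q * (1 - q))) (1 / q) 1 0 (by simpa)
          ?_ ?_ ?_ ?_⟩ <;> simp <;> match_scalars <;> field_simp <;> ring
  · obtain ⟨σ, hσ⟩ := IsAlgClosed.exists_pow_nat_eq (1 / (4 * b)) two_pos
    have hσ0 : σ ≠ 0 := by rintro rfl; simp [hb] at hσ
    obtain rfl : b = 1 / (4 * σ ^ 2) := by rw [hσ]; field_simp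
    field_simp at e1 e2 e3 e4
    obtain rfl : c = -(4 * a ^ 2 * σ ^ 2) := by grind
    obtain rfl : q = 4 * a ^ 2 * σ ^ 2 - 2 := by grind
    obtain rfl : p = 4 * σ ^ 2 * (4 * a ^ 3 * σ ^ 2 - a) := by grind
    refine ⟨.c08, iso (-(4 * a * σ ^ 2) - 2 * σ) (-1) (-(2 * a * σ ^ 2)) (-1 / 2)
      (by ring_nf; simpa) ?_ ?_ ?_ ?_⟩ <;> simp <;> match_scalars <;> field_simp <;> ring

end Classification

/-- Coordinate form of an isomorphism. -/
theorem Iso1.exists_coords {c d : Fin 2 → Fin 2 → V2} (h : Iso1 (tm c) (tm d)) :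
    ∃ M : Fin 2 → Fin 2 → ℂ, M 0 0 * M 1 1 - M 0 1 * M 1 0 ≠ 0 ∧
      ∀ i j k, ∑ l, c i j l * M l k = tm d (M i) (M j) k := by
  obtain ⟨φ, hφ⟩ := h
  have key (x : V2) : φ x = x 0 • φ ![1, 0] + x 1 • φ ![0, 1] := by
    rw [← map_smul, ← map_smul, ← map_add]
    congr 1
    ext k
    fin_cases k <;> simp
  refine ⟨![φ ![1, 0], φ ![0, 1]], fun h0 => ?_, fun i j k => ?_⟩
  · simp only [Matrix.cons_val_zero, Matrix.cons_val_one] at h0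
    have hker (x : V2) (hx : φ x = 0) : x = 0 := by simpa using hx
    have h1 := hker ![φ ![0, 1] 1, - φ ![1, 0] 1] (by
      rw [key]; ext k; fin_cases k <;> simp <;> grind)
    have h2 := hker ![φ ![0, 1] 0, - φ ![1, 0] 0] (by
      rw [key]; ext k; fin_cases k <;> simp <;> grind)
    have h3 : φ ![1, 0] = 0 := by
      ext k
      fin_cases k
      · simpa using congrFun h2 1
      · simpa using congrFun h1 1
    simpa using congrFun (hker _ h3) 0
  · have hc := hφ (Pi.single i 1) (Pi.single j 1)
    have h1 : tm c (Pi.single i 1) (Pi.single j 1) = c i j := by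
      fin_cases i <;> fin_cases j <;> simp [tm]
    have h2 (i : Fin 2) : φ (Pi.single i 1) = ![φ ![1, 0], φ ![0, 1]] i := by
      rw [key]; fin_cases i <;> simp
    rw [h1, h2, h2, key] at hc
    rw [← hc]
    simp

set_option maxHeartbeats 4000000 in
theorem plAlg_eq_of_iso (i j : PLIdx) (h : Iso1 (tm (plAlg i)) (tm (plAlg j))) : i = j := by
  obtain ⟨M, hM, h⟩ := h.exists_coords
  have h1 := h 0 0 0
  have h2 := h 0 0 1
  have h3 := h 0 1 0
  have h4 := h 0 1 1
  have h5 := h 1 0 0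
  have h6 := h 1 0 1
  have h7 := h 1 1 0
  have h8 := h 1 1 1
  clear h
  cases i <;> cases j <;> simp [tm, plAlg, tbl] at h1 h2 h3 h4 h5 h6 h7 h8 ⊢ <;> grind

/-- Every nonzero 2-dimensional pre-Lie algebra over ℂ is isomorphic to
exactly one of C01–C08; these are pairwise non-isomorphic, and within the families
C05^α and C06^α distinct parameters give non-isomorphic algebras. -/
theorem statement13 (C : Type*) [AddCommGroup C] [Module ℂ C]
    (hdim : Module.finrank ℂ C = 2)
    (circ : C →ₗ[ℂ] C →ₗ[ℂ] C)
    (hpre : ∀ x y z : C, circ (circ x y) z - circ (circ y x) z =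
      circ x (circ y z) - circ y (circ x z))
    (hnz : ∃ x y : C, circ x y ≠ 0) :
    (∃ i : PLIdx, Iso1 (fun x y => circ x y) (tm (plAlg i))) ∧
    (∀ i j : PLIdx, Iso1 (tm (plAlg i)) (tm (plAlg j)) → i = j) := by
  refine ⟨?_, plAlg_eq_of_iso⟩
  by_cases hcomm : ∀ x y, circ x y = circ y x
  · exact exists_iso1_plAlg_of_comm hdim circ hpre hcomm hnz
  · exact exists_iso1_plAlg_of_not_comm hdim circ hpre hcomm
end
end
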